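/- Under a scaling of the heterogeneous key predistribution model with on/off channels satisfying the scaling condition Λ_1(n) = α_n λ_1(n) = c_n (log n)/n with lim_{n→∞} c_n = c, if c > 1 then the probability that the random graph G(n; μ, K_n, P_n, α_n) has no isolated nodes tends to 1 as n → ∞. -/

import Mathlib

/-!
A union bound over the vertices proves the theorem. Conditionally on the class `i` and the key
ring of a vertex `x`, the other `n - 1` vertices are independently adjacent to `x`, each with
probability `α λ_i`, so `x` is isolated with conditional probability `(1 - α λ_i) ^ (n - 1)`
(`sum_wt_isolated_eq`, `sum_nodeWt_linkFail`). Larger key rings meet more rings, hence `λ_i ≥ λ_1`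
(`lamb_zero_le`), and the probability that some vertex is isolated is at most
`n (1 - Λ_1) ^ (n - 1) ≤ exp (log n - (n - 1) Λ_1)` (`one_sub_le_pr_noIsolated`). Under the scaling
the exponent is `-(c_n (1 - 1 / n) - 1) log n`, which tends to `-∞` because `c > 1`.

Indices of classes start at `0` in the code, so `λ_1` is `lamb μ K P 0`.
-/

open Filter

/-- Probability that a uniformly random `b`-subset of a `P`-set avoids a fixed `a`-subset. -/
noncomputable def avoidProb (P a b : ℕ) : ℝ := ((P - a).choose b : ℝ) / (P.choose b : ℝ)

/-- `p_{ab}` : probability that independent uniformly random key rings of sizes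
`a` and `b` (from a pool of size `P`) intersect. -/
noncomputable def pEdge (P a b : ℕ) : ℝ := 1 - avoidProb P a b

/-- `λ_i` : mean edge probability of a class-`i` node in the inhomogeneous random key graph. -/
noncomputable def lamb {r : ℕ} (μ : Fin (r + 1) → ℝ) (K : Fin (r + 1) → ℕ) (P : ℕ)
    (i : Fin (r + 1)) : ℝ :=
  ∑ j, μ j * pEdge P (K i) (K j)

/-- A configuration of the model: a class for each vertex, a key ring for each vertex,
and an on/off state for each (unordered) channel. -/
abbrev Config (n r P : ℕ) := (Fin n → Fin (r + 1)) × (Fin n → Finset (Fin P)) × (Sym2 (Fin n) → Bool)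

/-- Probability weight of a configuration: classes are i.i.d. with law `μ`; given its class `i`,
a vertex's key ring is uniform among the `C(P, K i)` subsets of size `K i`; channels over
distinct pairs are i.i.d. Bernoulli(`α`) (diagonal channel variables are forced to `false`). -/
noncomputable def wt {n r P : ℕ} (μ : Fin (r + 1) → ℝ) (K : Fin (r + 1) → ℕ) (α : ℝ)
    (c : Config n r P) : ℝ :=
  (∏ x : Fin n, μ (c.1 x)) *
    (∏ x : Fin n, if (c.2.1 x).card = K (c.1 x) then ((P.choose (K (c.1 x)) : ℝ))⁻¹ else 0) *
    (∏ e : Sym2 (Fin n),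
      if e.IsDiag then (if c.2.2 e then 0 else 1) else (if c.2.2 e then α else 1 - α))

open Classical in
/-- Probability of an event under the heterogeneous key predistribution model
with on/off channels. -/
noncomputable def pr {n r P : ℕ} (μ : Fin (r + 1) → ℝ) (K : Fin (r + 1) → ℕ) (α : ℝ)
    (E : Config n r P → Prop) : ℝ :=
  ∑ c : Config n r P, if E c then wt μ K α c else 0

/-- Two vertices are adjacent iff their key rings intersect and the channel between them is on. -/
def Adj {n r P : ℕ} (c : Config n r P) (x y : Fin n) : Prop :=
  x ≠ y ∧ ((c.2.1 x) ∩ (c.2.1 y)).Nonempty ∧ c.2.2 s(x, y) = true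

/-- The random graph `G(n; μ, K, P, α)` as a simple graph. -/
def graphOf {n r P : ℕ} (c : Config n r P) : SimpleGraph (Fin n) :=
  SimpleGraph.fromRel (fun x y => ((c.2.1 x) ∩ (c.2.1 y)).Nonempty ∧ c.2.2 s(x, y) = true)

/-- A vertex is isolated if it has no neighbours. -/
def Isolated {n r P : ℕ} (c : Config n r P) (x : Fin n) : Prop := ∀ y, ¬ Adj c x y

/-- The graph has no isolated nodes. -/
def NoIsolatedNodes {n r P : ℕ} (c : Config n r P) : Prop := ∀ x, ¬ Isolated c x

/-! ### Product structure of the weight -/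

/-- Joint weight of the class and the key ring of a single vertex. -/
noncomputable def nodeWt {r P : ℕ} (μ : Fin (r + 1) → ℝ) (K : Fin (r + 1) → ℕ)
    (s : Fin (r + 1) × Finset (Fin P)) : ℝ :=
  μ s.1 * if s.2.card = K s.1 then ((P.choose (K s.1) : ℝ))⁻¹ else 0

/-- Weight of the state `b` of the channel `e`. -/
noncomputable def chanWt {n : ℕ} (α : ℝ) (e : Sym2 (Fin n)) (b : Bool) : ℝ :=
  if e.IsDiag then (if b then 0 else 1) else (if b then α else 1 - α)

/-- Probability that the channel fails to link two given key rings: `1 - α` if they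
intersect, `1` otherwise. -/
noncomputable def linkFail {P : ℕ} (α : ℝ) (S T : Finset (Fin P)) : ℝ :=
  if (S ∩ T).Nonempty then 1 - α else 1

lemma wt_eq {n r P : ℕ} (μ : Fin (r + 1) → ℝ) (K : Fin (r + 1) → ℕ) (α : ℝ)
    (t : Fin n → Fin (r + 1)) (S : Fin n → Finset (Fin P)) (B : Sym2 (Fin n) → Bool) :
    wt μ K α (t, S, B) = (∏ x, nodeWt μ K (t x, S x)) * ∏ e, chanWt α e (B e) := by
  simp only [wt, nodeWt, chanWt, Finset.prod_mul_distrib]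

lemma nodeWt_nonneg {r P : ℕ} {μ : Fin (r + 1) → ℝ} (hμ : ∀ i, 0 < μ i) (K : Fin (r + 1) → ℕ)
    (s : Fin (r + 1) × Finset (Fin P)) : 0 ≤ nodeWt μ K s := by
  unfold nodeWt
  have := (hμ s.1).le
  split_ifs <;> positivity

lemma chanWt_nonneg {n : ℕ} {α : ℝ} (hα : α ∈ Set.Ioo (0 : ℝ) 1) (e : Sym2 (Fin n)) (b : Bool) :
    0 ≤ chanWt α e b := by
  unfold chanWt
  have h1 := hα.1
  have h2 := hα.2
  split_ifs <;> linarith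

lemma wt_nonneg {n r P : ℕ} {μ : Fin (r + 1) → ℝ} (hμ : ∀ i, 0 < μ i) (K : Fin (r + 1) → ℕ)
    {α : ℝ} (hα : α ∈ Set.Ioo (0 : ℝ) 1) (c : Config n r P) : 0 ≤ wt μ K α c := by
  obtain ⟨t, S, B⟩ := c
  rw [wt_eq]
  exact mul_nonneg (Finset.prod_nonneg fun _ _ => nodeWt_nonneg hμ K _)
    (Finset.prod_nonneg fun _ _ => chanWt_nonneg hα _ _)

/-- Summing a product over all vertices of a function of (class, ring) gives the product of the
single-vertex sums. -/
lemma sum_prod_node {n r P : ℕ} (f : Fin n → Fin (r + 1) × Finset (Fin P) → ℝ) :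
    ∑ t : Fin n → Fin (r + 1), ∑ S : Fin n → Finset (Fin P), ∏ y, f y (t y, S y) =
      ∏ y, ∑ s, f y s := by
  rw [Finset.prod_univ_sum, Fintype.piFinset_univ, ← Fintype.sum_prod_type']
  exact Fintype.sum_equiv (Equiv.arrowProdEquivProdArrow (Fin n) (fun _ => Fin (r + 1))
    (fun _ => Finset (Fin P))).symm _ _ (fun _ => rfl)

lemma sum_prod_chan {n : ℕ} (g : Sym2 (Fin n) → Bool → ℝ) :
    ∑ B : Sym2 (Fin n) → Bool, ∏ e, g e (B e) = ∏ e, (g e true + g e false) := by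
  have h := Finset.prod_univ_sum (fun _ : Sym2 (Fin n) => (Finset.univ : Finset Bool)) g
  rw [Fintype.piFinset_univ] at h
  rw [← h]
  simp

/-! ### Edge probabilities -/

/-- A uniformly random ring of size `b` avoids the ring `S` with probability
`avoidProb P S.card b`. -/
lemma sum_ring_disjoint {P : ℕ} (b : ℕ) (S : Finset (Fin P)) :
    ∑ T : Finset (Fin P), (if T.card = b then ((P.choose b : ℝ))⁻¹ else 0) *
      (if (S ∩ T).Nonempty then 0 else 1) = avoidProb P S.card b := by
  have hset : (Finset.univ.filter fun T : Finset (Fin P) => T.card = b ∧ ¬ (S ∩ T).Nonempty) =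
      Finset.powersetCard b Sᶜ := by
    ext T
    simp only [Finset.mem_filter, Finset.mem_univ, true_and, Finset.mem_powersetCard,
      Finset.not_nonempty_iff_eq_empty, ← Finset.disjoint_iff_inter_eq_empty]
    rw [and_comm, Finset.subset_compl_iff_disjoint_left]
  have : ∀ T : Finset (Fin P), (if T.card = b then ((P.choose b : ℝ))⁻¹ else 0) *
      (if (S ∩ T).Nonempty then 0 else 1) =
      if T.card = b ∧ ¬ (S ∩ T).Nonempty then ((P.choose b : ℝ))⁻¹ else 0 := by
    intro T
    split_ifs <;> simp_all
  simp_rw [this]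
  rw [← Finset.sum_filter, hset, Finset.sum_const, Finset.card_powersetCard, Finset.card_compl,
    Fintype.card_fin, avoidProb, nsmul_eq_mul, div_eq_mul_inv]

lemma sum_ring {P b : ℕ} (hb : b ≤ P) :
    ∑ T : Finset (Fin P), (if T.card = b then ((P.choose b : ℝ))⁻¹ else 0) = 1 := by
  have h := sum_ring_disjoint (P := P) b ∅
  have hne : (P.choose b : ℝ) ≠ 0 := by exact_mod_cast (Nat.choose_pos hb).ne'
  simpa [avoidProb, hne] using h

lemma avoidProb_anti {P a a' : ℕ} (h : a ≤ a') (b : ℕ) : avoidProb P a' b ≤ avoidProb P a b := by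
  unfold avoidProb
  gcongr

lemma lamb_zero_le {r : ℕ} {μ : Fin (r + 1) → ℝ} (hμ : ∀ i, 0 < μ i) {K : Fin (r + 1) → ℕ}
    (hK : Monotone K) (P : ℕ) (i : Fin (r + 1)) : lamb μ K P 0 ≤ lamb μ K P i := by
  unfold lamb pEdge
  refine Finset.sum_le_sum fun j _ => mul_le_mul_of_nonneg_left ?_ (hμ j).le
  linarith [avoidProb_anti (P := P) (hK (Fin.zero_le i)) (K j)]

lemma sum_nodeWt {r P : ℕ} {μ : Fin (r + 1) → ℝ} (hμsum : ∑ i, μ i = 1) {K : Fin (r + 1) → ℕ}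
    (hK : ∀ i, K i ≤ P) : ∑ s : Fin (r + 1) × Finset (Fin P), nodeWt μ K s = 1 := by
  rw [Fintype.sum_prod_type, ← hμsum]
  refine Finset.sum_congr rfl fun i _ => ?_
  simp only [nodeWt]
  rw [← Finset.mul_sum, sum_ring (hK i), mul_one]

/-- A vertex with a ring of size `K i` is not linked to a random other vertex with
probability `1 - α λ_i`. -/
lemma sum_nodeWt_linkFail {r P : ℕ} {μ : Fin (r + 1) → ℝ} (hμsum : ∑ i, μ i = 1)
    {K : Fin (r + 1) → ℕ} (hK : ∀ i, K i ≤ P) (α : ℝ) (i : Fin (r + 1)) (S : Finset (Fin P))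
    (hS : S.card = K i) :
    ∑ s, nodeWt μ K s * linkFail α S s.2 = 1 - α * lamb μ K P i := by
  have key : ∀ j, ∑ T : Finset (Fin P), nodeWt μ K (j, T) * linkFail α S T =
      μ j - α * (μ j * pEdge P (K i) (K j)) := by
    intro j
    have hpt : ∀ T : Finset (Fin P), nodeWt μ K (j, T) * linkFail α S T =
        μ j * ((1 - α) * (if T.card = K j then ((P.choose (K j) : ℝ))⁻¹ else 0) +
          α * ((if T.card = K j then ((P.choose (K j) : ℝ))⁻¹ else 0) *
            (if (S ∩ T).Nonempty then 0 else 1))) := by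
      intro T
      simp only [nodeWt, linkFail]
      split_ifs <;> ring
    simp_rw [hpt]
    rw [← Finset.mul_sum, Finset.sum_add_distrib, ← Finset.mul_sum, ← Finset.mul_sum,
      sum_ring (hK j), sum_ring_disjoint, hS, pEdge]
    ring
  rw [Fintype.sum_prod_type]
  simp only [key]
  rw [Finset.sum_sub_distrib, hμsum, ← Finset.mul_sum, lamb]

/-! ### The probability that a vertex is isolated -/

lemma sum_wt {n r P : ℕ} {μ : Fin (r + 1) → ℝ} (hμsum : ∑ i, μ i = 1) {K : Fin (r + 1) → ℕ}
    (hK : ∀ i, K i ≤ P) (α : ℝ) : ∑ c : Config n r P, wt μ K α c = 1 := by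
  have hB : ∑ B : Sym2 (Fin n) → Bool, ∏ e, chanWt α e (B e) = 1 := by
    rw [sum_prod_chan]
    refine Finset.prod_eq_one fun e _ => ?_
    by_cases h : e.IsDiag <;> simp [chanWt, h]
  simp only [Fintype.sum_prod_type, wt_eq, ← Finset.mul_sum, hB, mul_one]
  rw [sum_prod_node fun _ s => nodeWt μ K s]
  simp [sum_nodeWt hμsum hK]

open Classical in
/-- Given all key rings, the channels leave `x` isolated with probability
`∏_{y ≠ x} linkFail α Σ_x Σ_y`. -/
lemma sum_chan_isolated {n r P : ℕ} (α : ℝ) (t : Fin n → Fin (r + 1))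
    (S : Fin n → Finset (Fin P)) (x : Fin n) :
    ∑ B : Sym2 (Fin n) → Bool,
      (if Isolated (t, S, B) x then ∏ e, chanWt α e (B e) else 0) =
      ∏ y ∈ Finset.univ.erase x, linkFail α (S x) (S y) := by
  -- `G e` says that `e` is a channel from `x` to a vertex whose ring meets that of `x`.
  set G : Sym2 (Fin n) → Prop := fun e => ∃ y, y ≠ x ∧ e = s(x, y) ∧ (S x ∩ S y).Nonempty with hG
  have hiso : ∀ B : Sym2 (Fin n) → Bool,
      (if Isolated (t, S, B) x then ∏ e, chanWt α e (B e) else 0) =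
        ∏ e, (if G e ∧ B e = true then 0 else chanWt α e (B e)) := by
    intro B
    split_ifs with h
    · refine Finset.prod_congr rfl fun e _ => ?_
      rw [if_neg]
      rintro ⟨⟨y, hy, rfl, hne⟩, hb⟩
      exact h y ⟨hy.symm, hne, hb⟩
    · unfold Isolated at h
      push Not at h
      obtain ⟨y, hy, hne, hb⟩ := h
      symm
      refine Finset.prod_eq_zero (Finset.mem_univ s(x, y)) (if_pos ⟨⟨y, hy.symm, rfl, hne⟩, hb⟩)
  simp_rw [hiso]
  rw [sum_prod_chan fun e b => if G e ∧ b = true then 0 else chanWt α e b]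
  have hfac : ∀ e : Sym2 (Fin n), ((if G e ∧ true = true then 0 else chanWt α e true) +
      (if G e ∧ false = true then 0 else chanWt α e false)) = if G e then 1 - α else 1 := by
    intro e
    by_cases hg : G e
    · obtain ⟨y, hy, rfl, hne⟩ := id hg
      simp [hg, chanWt, hy.symm]
    · by_cases hd : e.IsDiag <;> simp [hg, hd, chanWt]
  rw [Finset.prod_congr rfl fun e _ => hfac e]
  have hinj : Set.InjOn (fun y => s(x, y)) (Finset.univ.erase x : Finset (Fin n)) := by
    intro a _ b _ hab
    exact Sym2.congr_right.mp hab
  rw [← Finset.prod_subset (Finset.subset_univ ((Finset.univ.erase x).image fun y => s(x, y))),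
    Finset.prod_image hinj]
  · refine Finset.prod_congr rfl fun y hy => ?_
    have hyx : y ≠ x := Finset.ne_of_mem_erase hy
    have : G s(x, y) ↔ (S x ∩ S y).Nonempty := by
      constructor
      · rintro ⟨z, _, hz, hne⟩
        have : y = z := Sym2.congr_right.mp hz
        rwa [this]
      · exact fun h => ⟨y, hyx, rfl, h⟩
    simp [this, linkFail]
  · intro e _ he
    rw [if_neg]
    rintro ⟨y, hy, rfl, _⟩
    exact he (Finset.mem_image.mpr ⟨y, by simpa using hy, rfl⟩)

open Classical in
/-- The isolation probability of `x`, by conditioning on the class and ring `s` of `x`: the other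
`n - 1` vertices are then independent. -/
lemma sum_wt_isolated_eq {n r P : ℕ} (μ : Fin (r + 1) → ℝ) (K : Fin (r + 1) → ℕ) (α : ℝ)
    (x : Fin n) :
    pr μ K α (fun c : Config n r P => Isolated c x) =
      ∑ s : Fin (r + 1) × Finset (Fin P),
        nodeWt μ K s * (∑ s', nodeWt μ K s' * linkFail α s.2 s'.2) ^ (n - 1) := by
  have h1 : pr μ K α (fun c : Config n r P => Isolated c x) =
      ∑ t : Fin n → Fin (r + 1), ∑ S : Fin n → Finset (Fin P),
        (∏ y, nodeWt μ K (t y, S y)) * ∏ y ∈ Finset.univ.erase x, linkFail α (S x) (S y) := by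
    unfold pr
    rw [Fintype.sum_prod_type]
    refine Finset.sum_congr rfl fun t _ => ?_
    rw [Fintype.sum_prod_type]
    refine Finset.sum_congr rfl fun S _ => ?_
    rw [← sum_chan_isolated α t S x, Finset.mul_sum]
    refine Finset.sum_congr rfl fun B _ => ?_
    rw [wt_eq, mul_ite, mul_zero]
  -- Fixing the value `s` at `x` turns the summand into a product over the vertices.
  set f : Fin (r + 1) × Finset (Fin P) → Fin n → Fin (r + 1) × Finset (Fin P) → ℝ :=
    fun s y s' => if y = x then (if s' = s then nodeWt μ K s' else 0)
      else nodeWt μ K s' * linkFail α s.2 s'.2 with hf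
  have h2 : ∀ (t : Fin n → Fin (r + 1)) (S : Fin n → Finset (Fin P)),
      (∏ y, nodeWt μ K (t y, S y)) * ∏ y ∈ Finset.univ.erase x, linkFail α (S x) (S y) =
        ∑ s, ∏ y, f s y (t y, S y) := by
    intro t S
    rw [Finset.sum_eq_single (t x, S x)]
    · rw [← Finset.mul_prod_erase _ _ (Finset.mem_univ x),
        ← Finset.mul_prod_erase _ (fun y => f (t x, S x) y (t y, S y)) (Finset.mem_univ x),
        mul_assoc, ← Finset.prod_mul_distrib]
      congr 1
      · simp [hf]
      · refine Finset.prod_congr rfl fun y hy => ?_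
        simp [hf, Finset.ne_of_mem_erase hy]
    · intro s _ hs
      refine Finset.prod_eq_zero (Finset.mem_univ x) ?_
      simp only [hf, if_true]
      exact if_neg hs.symm
    · simp
  rw [h1]
  simp_rw [h2]
  have h3 : ∑ t : Fin n → Fin (r + 1), ∑ S : Fin n → Finset (Fin P), ∑ s,
      ∏ y, f s y (t y, S y) = ∑ s, ∏ y, ∑ s', f s y s' := by
    simp_rw [← sum_prod_node]
    symm
    rw [Finset.sum_comm]
    exact Finset.sum_congr rfl fun t _ => Finset.sum_comm
  rw [h3]
  refine Finset.sum_congr rfl fun s _ => ?_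
  rw [← Finset.mul_prod_erase _ _ (Finset.mem_univ x)]
  congr 1
  · simp [hf]
  · rw [Finset.prod_congr rfl (g := fun _ => ∑ s', nodeWt μ K s' * linkFail α s.2 s'.2)]
    · simp [Finset.card_erase_of_mem]
    · intro y hy
      simp [hf, Finset.ne_of_mem_erase hy]

lemma pr_isolated_le {n r P : ℕ} {μ : Fin (r + 1) → ℝ} (hμ : ∀ i, 0 < μ i)
    (hμsum : ∑ i, μ i = 1) {K : Fin (r + 1) → ℕ} (hmono : Monotone K) (hK : ∀ i, K i ≤ P)
    {α : ℝ} (hα : α ∈ Set.Ioo (0 : ℝ) 1) (x : Fin n) :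
    pr μ K α (fun c : Config n r P => Isolated c x) ≤ (1 - α * lamb μ K P 0) ^ (n - 1) := by
  rw [sum_wt_isolated_eq]
  calc _ ≤ ∑ s : Fin (r + 1) × Finset (Fin P),
        nodeWt μ K s * (1 - α * lamb μ K P 0) ^ (n - 1) := by
        refine Finset.sum_le_sum fun s _ => ?_
        by_cases hs : s.2.card = K s.1
        · refine mul_le_mul_of_nonneg_left ?_ (nodeWt_nonneg hμ K s)
          refine pow_le_pow_left₀ ?_ ?_ _
          · refine Finset.sum_nonneg fun s' _ => mul_nonneg (nodeWt_nonneg hμ K s') ?_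
            unfold linkFail
            split_ifs
            · linarith [hα.2]
            · exact zero_le_one
          · rw [sum_nodeWt_linkFail hμsum hK α s.1 s.2 hs]
            have := mul_le_mul_of_nonneg_left (lamb_zero_le hμ hmono P s.1) hα.1.le
            linarith
        · simp [nodeWt, hs]
    _ = _ := by rw [← Finset.sum_mul, sum_nodeWt hμsum hK, one_mul]

lemma pr_le_one {n r P : ℕ} {μ : Fin (r + 1) → ℝ} (hμ : ∀ i, 0 < μ i)
    (hμsum : ∑ i, μ i = 1) {K : Fin (r + 1) → ℕ} (hK : ∀ i, K i ≤ P)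
    {α : ℝ} (hα : α ∈ Set.Ioo (0 : ℝ) 1) (E : Config n r P → Prop) : pr μ K α E ≤ 1 := by
  rw [← sum_wt (n := n) hμsum hK α]
  refine Finset.sum_le_sum fun c _ => ?_
  split_ifs
  · exact le_rfl
  · exact wt_nonneg hμ K hα c

/-- The union bound over the vertices. -/
lemma one_sub_le_pr_noIsolated {n r P : ℕ} {μ : Fin (r + 1) → ℝ} (hμ : ∀ i, 0 < μ i)
    (hμsum : ∑ i, μ i = 1) {K : Fin (r + 1) → ℕ} (hmono : Monotone K) (hK : ∀ i, K i ≤ P)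
    {α : ℝ} (hα : α ∈ Set.Ioo (0 : ℝ) 1) :
    1 - n * (1 - α * lamb μ K P 0) ^ (n - 1) ≤
      pr μ K α (fun c : Config n r P => NoIsolatedNodes c) := by
  classical
  have hunion : ∑ c : Config n r P, wt μ K α c ≤
      pr μ K α (fun c : Config n r P => NoIsolatedNodes c) +
        ∑ x : Fin n, pr μ K α (fun c : Config n r P => Isolated c x) := by
    unfold pr
    rw [Finset.sum_comm, ← Finset.sum_add_distrib]
    refine Finset.sum_le_sum fun c _ => ?_
    have hw := wt_nonneg hμ K hα c
    have hnn : ∀ x ∈ Finset.univ, 0 ≤ if Isolated c x then wt μ K α c else 0 := by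
      intro x _
      split_ifs
      · exact hw
      · exact le_rfl
    by_cases h : NoIsolatedNodes c
    · rw [if_pos h]
      linarith [Finset.sum_nonneg hnn]
    · rw [if_neg h, zero_add]
      unfold NoIsolatedNodes at h
      push Not at h
      obtain ⟨x, hx⟩ := h
      have := Finset.single_le_sum hnn (Finset.mem_univ x)
      rwa [if_pos hx] at this
  rw [sum_wt hμsum hK α] at hunion
  have hsum : ∑ x : Fin n, pr μ K α (fun c : Config n r P => Isolated c x) ≤
      n * (1 - α * lamb μ K P 0) ^ (n - 1) := by
    refine (Finset.sum_le_sum fun x _ => pr_isolated_le hμ hμsum hmono hK hα x).trans ?_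
    simp
  linarith

/-- one-law for absence of isolated nodes:
under the scaling `Λ₁(n) = αₙ λ₁(n) = cₙ log n / n` with `cₙ → c > 1`, the probability
that `G(n; μ, Kₙ, Pₙ, αₙ)` has no isolated nodes tends to `1`. -/
theorem isolated_nodes_one_law {r : ℕ} (μ : Fin (r + 1) → ℝ)
    (hμpos : ∀ i, 0 < μ i) (hμsum : ∑ i, μ i = 1)
    (K : ℕ → Fin (r + 1) → ℕ) (P : ℕ → ℕ) (α : ℕ → ℝ)
    (hK1 : ∀ n, 1 ≤ K n 0) (hKmono : ∀ n, Monotone (K n))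
    (hKP : ∀ n, 2 * K n (Fin.last r) ≤ P n)
    (hα : ∀ n, α n ∈ Set.Ioo (0 : ℝ) 1)
    (cseq : ℕ → ℝ) (c : ℝ)
    (hscal : ∀ n, 2 ≤ n → α n * lamb μ (K n) (P n) 0 = cseq n * Real.log n / n)
    (hc : Tendsto cseq atTop (nhds c)) (hcgt : 1 < c) :
    Tendsto (fun n => pr μ (K n) (α n) (fun cfg : Config n r (P n) => NoIsolatedNodes cfg))
      atTop (nhds 1) := by
  have hKle : ∀ n i, K n i ≤ P n := fun n i => by
    have h1 := hKmono n (Fin.le_last i)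
    have h2 := hKP n
    omega
  have hinv : Tendsto (fun n : ℕ => (1 : ℝ) - 1 / n) atTop (nhds 1) := by
    simpa using (tendsto_const_nhds (x := (1 : ℝ))).sub tendsto_one_div_atTop_nhds_zero_nat
  have hlog : Tendsto (fun n : ℕ => Real.log n) atTop atTop :=
    Real.tendsto_log_atTop.comp tendsto_natCast_atTop_atTop
  have hexp : Tendsto (fun n : ℕ => Real.exp (-((cseq n * (1 - 1 / n) - 1) * Real.log n)))
      atTop (nhds 0) := by
    refine Real.tendsto_exp_neg_atTop_nhds_zero.comp ?_
    refine Tendsto.pos_mul_atTop (C := c * 1 - 1) (by linarith) ?_ hlog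
    exact (hc.mul hinv).sub_const 1
  have hlower : Tendsto (fun n : ℕ => 1 - Real.exp (-((cseq n * (1 - 1 / n) - 1) * Real.log n)))
      atTop (nhds 1) := by
    simpa using (tendsto_const_nhds (x := (1 : ℝ))).sub hexp
  refine tendsto_of_tendsto_of_tendsto_of_le_of_le' hlower tendsto_const_nhds ?_
    (Eventually.of_forall fun n => pr_le_one hμpos hμsum (hKle n) (hα n) _)
  filter_upwards [eventually_ge_atTop 2] with n hn
  refine le_trans ?_
    (one_sub_le_pr_noIsolated (n := n) hμpos hμsum (hKmono n) (hKle n) (hα n))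
  have hn0 : (0 : ℝ) < n := by positivity
  set L := α n * lamb μ (K n) (P n) 0 with hL
  have hL1 : L ≤ 1 := by
    have hlam : lamb μ (K n) (P n) 0 ≤ 1 := by
      rw [← hμsum]
      refine Finset.sum_le_sum fun j _ => ?_
      have : 0 ≤ avoidProb (P n) (K n 0) (K n j) := by unfold avoidProb; positivity
      unfold pEdge
      nlinarith [hμpos j]
    nlinarith [(hα n).1, (hα n).2]
  have hpow : (1 - L) ^ (n - 1) ≤ Real.exp (-((n - 1 : ℕ) * L)) := by
    rw [show -(((n - 1 : ℕ) : ℝ) * L) = ((n - 1 : ℕ) : ℝ) * (-L) by ring, Real.exp_nat_mul]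
    exact pow_le_pow_left₀ (by linarith) (by linarith [Real.add_one_le_exp (-L)]) _
  have heq : Real.exp (-((cseq n * (1 - 1 / n) - 1) * Real.log n)) =
      n * Real.exp (-((n - 1 : ℕ) * L)) := by
    nth_rewrite 3 [← Real.exp_log hn0]
    rw [← Real.exp_add, hL, hscal n hn, Nat.cast_sub (by omega)]
    congr 1
    push_cast
    field_simp
    ring
  rw [heq]
  have := mul_le_mul_of_nonneg_left hpow hn0.le
  linarith
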